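/- Theta representation and Landen-type identity for S'' (formula (n3)): Let τ lie in the complex upper half-plane and let u ∈ ℂ be such that θ₁(u,τ)·θ₄(u,τ) ≠ 0 and θ₁(u, τ/2) ≠ 0. Then S''(u,τ) = −π² θ₂(0,τ)² θ₃(0,τ)² θ₄(0,τ)³ · θ₄(2u,τ) / (θ₁(u,τ)² θ₄(u,τ)²) = −π² θ₃(0, τ/2)·θ₄(0, τ/2)·θ₂(0, τ/2)² · θ₃(u, τ/2)·θ₄(u, τ/2)/θ₁(u, τ/2)². -/

import Mathlib

/-!
The product `θ₁(x, τ) θ₂(y, τ)` is a combination of products of theta functions of `2τ` at `x ± y`.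
Differentiating this formula along `(u + v, u - v)` and along `(v, u)` at `v = 0` evaluates the
Wronskian of `θ₁, θ₂` for `τ` and that of `θ₁, θ₄` for `2τ`. The second one makes `S'(u, 2τ)` a
constant multiple of `θ₂(u, τ) / θ₁(u, τ)`, whose derivative is given by the first one.

The constants come from Jacobi's formula `θ₁'(0) = π θ₂(0) θ₃(0) θ₄(0)`: both of its sides satisfy
the same relation between `τ` and `2τ`, so their quotient is invariant under `τ ↦ 2τ` and equals its
limit at `i∞`.
-/

open Complex

/-- Jacobi theta function θ₁(u,τ). -/
noncomputable def theta1 (u τ : ℂ) : ℂ :=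
  -∑' k : ℤ, Complex.exp ((Real.pi : ℂ) * Complex.I * τ * ((k : ℂ) + 1/2)^2
      + 2 * (Real.pi : ℂ) * Complex.I * (u + 1/2) * ((k : ℂ) + 1/2))

/-- Jacobi theta function θ₂(u,τ). -/
noncomputable def theta2 (u τ : ℂ) : ℂ :=
  ∑' k : ℤ, Complex.exp ((Real.pi : ℂ) * Complex.I * τ * ((k : ℂ) + 1/2)^2
      + 2 * (Real.pi : ℂ) * Complex.I * u * ((k : ℂ) + 1/2))

/-- Jacobi theta function θ₃(u,τ). -/
noncomputable def theta3 (u τ : ℂ) : ℂ :=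
  ∑' k : ℤ, Complex.exp ((Real.pi : ℂ) * Complex.I * τ * (k : ℂ)^2
      + 2 * (Real.pi : ℂ) * Complex.I * u * (k : ℂ))

/-- Jacobi theta function θ₄(u,τ). -/
noncomputable def theta4 (u τ : ℂ) : ℂ :=
  ∑' k : ℤ, Complex.exp ((Real.pi : ℂ) * Complex.I * τ * (k : ℂ)^2
      + 2 * (Real.pi : ℂ) * Complex.I * (u + 1/2) * (k : ℂ))

/-- ζ_a(u,τ) = θ_a'(u,τ)/θ_a(u,τ). -/
noncomputable def zeta1 (u τ : ℂ) : ℂ := deriv (fun v => theta1 v τ) u / theta1 u τ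
noncomputable def zeta2 (u τ : ℂ) : ℂ := deriv (fun v => theta2 v τ) u / theta2 u τ
noncomputable def zeta3 (u τ : ℂ) : ℂ := deriv (fun v => theta3 v τ) u / theta3 u τ
noncomputable def zeta4 (u τ : ℂ) : ℂ := deriv (fun v => theta4 v τ) u / theta4 u τ

/-- ℘_a(u,τ) = −∂_u ζ_a(u,τ). -/
noncomputable def wp1 (u τ : ℂ) : ℂ := -deriv (fun v => zeta1 v τ) u
noncomputable def wp2 (u τ : ℂ) : ℂ := -deriv (fun v => zeta2 v τ) u
noncomputable def wp1' (u τ : ℂ) : ℂ := deriv (fun v => wp1 v τ) u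
noncomputable def wp2' (u τ : ℂ) : ℂ := deriv (fun v => wp2 v τ) u

/-- S'(u,τ) = ζ₁(u,τ) − ζ₄(u,τ). -/
noncomputable def Sp (u τ : ℂ) : ℂ := zeta1 u τ - zeta4 u τ
/-- S''(u,τ) = ∂_u S'(u,τ). -/
noncomputable def Spp (u τ : ℂ) : ℂ := deriv (fun v => Sp v τ) u
/-- S'''(u,τ) = ∂_u S''(u,τ). -/
noncomputable def Sppp (u τ : ℂ) : ℂ := deriv (fun v => Spp v τ) u

/-- Partial derivative in the j-th coordinate of a ℂ-valued function on ℝ^N. -/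
noncomputable def pdC {N : ℕ} (j : Fin N) (f : (Fin N → ℝ) → ℂ) (x : Fin N → ℝ) : ℂ :=
  fderiv ℝ f x (Pi.single j 1)

/-- Partial derivative in the j-th coordinate of an ℝ-valued function on ℝ^d. -/
noncomputable def pd {d : ℕ} (j : Fin d) (f : (Fin d → ℝ) → ℝ) (x : Fin d → ℝ) : ℝ :=
  fderiv ℝ f x (Pi.single j 1)

open Filter Topology
open scoped Real

section ThetaChar

variable (a u τ : ℂ)

/-- The general term of the series `thetaChar a u τ`. -/
noncomputable def thetaCharTerm (k : ℤ) : ℂ :=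
  cexp (π * I * τ * (k + a) ^ 2 + 2 * π * I * u * (k + a))

/-- The theta function with characteristic `a`, of which `theta1`, …, `theta4` are the cases
`a = 0, 1/2` up to a half-period shift of `u`. The second classical characteristic is absorbed
in `u`. -/
noncomputable def thetaChar : ℂ := ∑' k : ℤ, thetaCharTerm a u τ k

lemma thetaCharTerm_eq_exp_mul_jacobiTheta₂_term (k : ℤ) :
    thetaCharTerm a u τ k =
      cexp (π * I * τ * a ^ 2 + 2 * π * I * u * a) * jacobiTheta₂_term k (u + a * τ) τ := by
  rw [thetaCharTerm, jacobiTheta₂_term, ← Complex.exp_add]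
  ring_nf

lemma thetaChar_eq_exp_mul_jacobiTheta₂ :
    thetaChar a u τ =
      cexp (π * I * τ * a ^ 2 + 2 * π * I * u * a) * jacobiTheta₂ (u + a * τ) τ := by
  simp_rw [thetaChar, thetaCharTerm_eq_exp_mul_jacobiTheta₂_term, tsum_mul_left, jacobiTheta₂]

lemma thetaChar_add_one_left : thetaChar (a + 1) u τ = thetaChar a u τ := by
  rw [thetaChar, thetaChar, ← (Equiv.addRight (1 : ℤ)).tsum_eq (thetaCharTerm a u τ)]
  refine tsum_congr fun k => ?_
  simp only [thetaCharTerm, Equiv.coe_addRight]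
  push_cast
  ring_nf

lemma thetaChar_add_one : thetaChar a (u + 1) τ = cexp (2 * π * I * a) * thetaChar a u τ := by
  simp_rw [thetaChar_eq_exp_mul_jacobiTheta₂]
  rw [add_right_comm, jacobiTheta₂_add_left, ← mul_assoc, ← Complex.exp_add]
  ring_nf

lemma thetaChar_neg : thetaChar a (-u) τ = thetaChar (-a) u τ := by
  rw [thetaChar, thetaChar, ← (Equiv.neg ℤ).tsum_eq]
  refine tsum_congr fun k => ?_
  simp only [thetaCharTerm, Equiv.neg_apply]
  push_cast
  ring_nf

variable {τ}

lemma summable_thetaCharTerm (hτ : 0 < τ.im) : Summable (thetaCharTerm a u τ) := by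
  simp_rw [funext (thetaCharTerm_eq_exp_mul_jacobiTheta₂_term a u τ)]
  exact ((summable_jacobiTheta₂_term_iff _ τ).mpr hτ).mul_left _

lemma hasSum_mul_thetaCharTerm (hτ : 0 < τ.im) :
    HasSum (fun k : ℤ => 2 * π * I * (k + a) * thetaCharTerm a u τ k)
      (cexp (π * I * τ * a ^ 2 + 2 * π * I * u * a) *
        (2 * π * I * a * jacobiTheta₂ (u + a * τ) τ + jacobiTheta₂' (u + a * τ) τ)) := by
  refine ((((hasSum_jacobiTheta₂_term (u + a * τ) hτ).mul_left (2 * π * I * a)).add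
    (hasSum_jacobiTheta₂'_term (u + a * τ) hτ)).mul_left _).congr_fun fun k => ?_
  rw [thetaCharTerm_eq_exp_mul_jacobiTheta₂_term, jacobiTheta₂'_term]
  ring

lemma hasDerivAt_thetaChar (hτ : 0 < τ.im) :
    HasDerivAt (thetaChar a · τ) (∑' k : ℤ, 2 * π * I * (k + a) * thetaCharTerm a u τ k) u := by
  rw [(hasSum_mul_thetaCharTerm a u hτ).tsum_eq]
  simp_rw [thetaChar_eq_exp_mul_jacobiTheta₂]
  have hJ := (hasDerivAt_jacobiTheta₂_fst (u + a * τ) hτ).comp_add_const u (a * τ)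
  have hE : HasDerivAt (fun v : ℂ => π * I * τ * a ^ 2 + 2 * π * I * v * a) (2 * π * I * a) u := by
    simpa using
      (((hasDerivAt_id u).const_mul (2 * π * I)).mul_const a).const_add (π * I * τ * a ^ 2)
  exact (hE.cexp.mul hJ).congr_deriv (by ring)

end ThetaChar

section Product

/-- A pair of integers is `(j + k, j - k)` or `(j + k + 1, j - k)` for unique `j, k`, according to
the parity of its sum. -/
def sumSubEquiv : (ℤ × ℤ) ⊕ (ℤ × ℤ) ≃ ℤ × ℤ where
  toFun := Sum.elim (fun p => (p.1 + p.2, p.1 - p.2)) (fun p => (p.1 + p.2 + 1, p.1 - p.2))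
  invFun p :=
    if (p.1 + p.2) % 2 = 0 then Sum.inl ((p.1 + p.2) / 2, (p.1 - p.2) / 2)
    else Sum.inr ((p.1 + p.2 - 1) / 2, (p.1 - p.2 - 1) / 2)
  left_inv := by
    rintro (⟨j, k⟩ | ⟨j, k⟩)
    · have h : (j + k + (j - k)) % 2 = 0 := by omega
      simp only [Sum.elim_inl, h, if_true]
      congr 2 <;> omega
    · have h : ¬(j + k + 1 + (j - k)) % 2 = 0 := by omega
      simp only [Sum.elim_inr, h, if_false]
      congr 2 <;> omega
  right_inv := by
    rintro ⟨m, n⟩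
    by_cases h : (m + n) % 2 = 0
    · simp only [h, if_true, Sum.elim_inl]
      congr 1 <;> omega
    · simp only [h, if_false, Sum.elim_inr]
      congr 1 <;> omega

lemma thetaChar_mul_thetaChar (a b x y : ℂ) {τ : ℂ} (hτ : 0 < τ.im) :
    thetaChar a x τ * thetaChar b y τ =
      thetaChar ((a + b) / 2) (x + y) (2 * τ) * thetaChar ((a - b) / 2) (x - y) (2 * τ)
        + thetaChar ((a + b + 1) / 2) (x + y) (2 * τ)
          * thetaChar ((a - b + 1) / 2) (x - y) (2 * τ) := by
  have hτ2 : 0 < (2 * τ).im := by simpa using hτ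
  have tsum_mul {σ : ℂ} (hσ : 0 < σ.im) (c d z w : ℂ) :
      thetaChar c z σ * thetaChar d w σ =
        ∑' p : ℤ × ℤ, thetaCharTerm c z σ p.1 * thetaCharTerm d w σ p.2 :=
    tsum_mul_tsum_of_summable_norm (summable_thetaCharTerm c z hσ).norm
      (summable_thetaCharTerm d w hσ).norm
  have hsum := sumSubEquiv.summable_iff.mpr (summable_mul_of_summable_norm
    (summable_thetaCharTerm a x hτ).norm (summable_thetaCharTerm b y hτ).norm)
  rw [tsum_mul hτ, tsum_mul hτ2, tsum_mul hτ2, ← sumSubEquiv.tsum_eq]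
  refine (Summable.tsum_sum (hsum.comp_injective Sum.inl_injective)
    (hsum.comp_injective Sum.inr_injective)).trans ?_
  congr 1 <;> refine tsum_congr ?_
  all_goals
    rintro ⟨j, k⟩
    simp only [Function.comp_apply, thetaCharTerm, sumSubEquiv, Equiv.coe_fn_mk, Sum.elim_inl,
      Sum.elim_inr, ← Complex.exp_add]
    push_cast
    ring_nf

end Product

section JacobiTheta

lemma theta2_eq_thetaChar (u τ : ℂ) : theta2 u τ = thetaChar (1 / 2) u τ := rfl

lemma theta3_eq_thetaChar (u τ : ℂ) : theta3 u τ = thetaChar 0 u τ := by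
  simp [theta3, thetaChar, thetaCharTerm]

lemma theta1_eq_neg_theta2_add_half (u τ : ℂ) : theta1 u τ = -theta2 (u + 1 / 2) τ := rfl

lemma theta4_eq_theta3_add_half (u τ : ℂ) : theta4 u τ = theta3 (u + 1 / 2) τ := rfl

lemma theta2_add_one (u τ : ℂ) : theta2 (u + 1) τ = -theta2 u τ := by
  simp_rw [theta2_eq_thetaChar, thetaChar_add_one]
  rw [show 2 * π * I * (1 / 2) = π * I by ring, Complex.exp_pi_mul_I, neg_one_mul]

lemma theta3_add_one (u τ : ℂ) : theta3 (u + 1) τ = theta3 u τ := by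
  simp [theta3_eq_thetaChar, thetaChar_add_one]

lemma theta1_eq_theta2_sub_half (u τ : ℂ) : theta1 u τ = theta2 (u - 1 / 2) τ := by
  rw [theta1_eq_neg_theta2_add_half, show u + 1 / 2 = u - 1 / 2 + 1 by ring, theta2_add_one,
    neg_neg]

lemma theta4_eq_theta3_sub_half (u τ : ℂ) : theta4 u τ = theta3 (u - 1 / 2) τ := by
  rw [theta4_eq_theta3_add_half, show u + 1 / 2 = u - 1 / 2 + 1 by ring, theta3_add_one]

lemma even_theta2 (τ : ℂ) : Function.Even (theta2 · τ) := fun u => by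
  simp_rw [theta2_eq_thetaChar]
  rw [thetaChar_neg, ← thetaChar_add_one_left]
  norm_num

lemma even_theta3 (τ : ℂ) : Function.Even (theta3 · τ) := fun u => by
  simp_rw [theta3_eq_thetaChar, thetaChar_neg, neg_zero]

lemma odd_theta1 (τ : ℂ) : Function.Odd (theta1 · τ) := fun u => by
  simp only
  rw [theta1_eq_neg_theta2_add_half, theta1_eq_theta2_sub_half, ← (even_theta2 τ).eq,
    neg_add', neg_neg]

lemma even_theta4 (τ : ℂ) : Function.Even (theta4 · τ) := fun u => by
  simp only
  rw [theta4_eq_theta3_add_half, theta4_eq_theta3_sub_half, ← (even_theta3 τ).eq,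
    neg_add', neg_neg]

lemma theta1_zero (τ : ℂ) : theta1 0 τ = 0 := (odd_theta1 τ).map_zero

variable {τ : ℂ}

lemma differentiable_theta2 (hτ : 0 < τ.im) : Differentiable ℂ (theta2 · τ) := fun u =>
  (hasDerivAt_thetaChar (1 / 2) u hτ).differentiableAt

lemma differentiable_theta3 (hτ : 0 < τ.im) : Differentiable ℂ (theta3 · τ) := fun u => by
  simp_rw [theta3_eq_thetaChar]
  exact (hasDerivAt_thetaChar 0 u hτ).differentiableAt

lemma differentiable_theta1 (hτ : 0 < τ.im) : Differentiable ℂ (theta1 · τ) :=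
  ((differentiable_theta2 hτ).comp (differentiable_id.add_const (1 / 2))).neg

lemma differentiable_theta4 (hτ : 0 < τ.im) : Differentiable ℂ (theta4 · τ) :=
  (differentiable_theta3 hτ).comp (differentiable_id.add_const (1 / 2))

lemma theta2_mul_theta2 (x y : ℂ) (hτ : 0 < τ.im) :
    theta2 x τ * theta2 y τ =
      theta2 (x + y) (2 * τ) * theta3 (x - y) (2 * τ)
        + theta3 (x + y) (2 * τ) * theta2 (x - y) (2 * τ) := by
  simp_rw [theta2_eq_thetaChar, theta3_eq_thetaChar]
  rw [thetaChar_mul_thetaChar _ _ _ _ hτ, ← thetaChar_add_one_left 0 (x + y)]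
  norm_num

lemma theta3_mul_theta3 (x y : ℂ) (hτ : 0 < τ.im) :
    theta3 x τ * theta3 y τ =
      theta3 (x + y) (2 * τ) * theta3 (x - y) (2 * τ)
        + theta2 (x + y) (2 * τ) * theta2 (x - y) (2 * τ) := by
  simp_rw [theta2_eq_thetaChar, theta3_eq_thetaChar]
  rw [thetaChar_mul_thetaChar _ _ _ _ hτ]
  norm_num

lemma theta1_mul_theta2 (x y : ℂ) (hτ : 0 < τ.im) :
    theta1 x τ * theta2 y τ =
      theta1 (x + y) (2 * τ) * theta4 (x - y) (2 * τ)
        + theta4 (x + y) (2 * τ) * theta1 (x - y) (2 * τ) := by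
  simp_rw [theta1_eq_neg_theta2_add_half, theta4_eq_theta3_add_half]
  rw [neg_mul, theta2_mul_theta2 _ _ hτ, add_right_comm, add_sub_right_comm]
  ring

lemma theta3_mul_theta4 (x y : ℂ) (hτ : 0 < τ.im) :
    theta3 x τ * theta4 y τ =
      theta4 (x + y) (2 * τ) * theta4 (x - y) (2 * τ)
        - theta1 (x + y) (2 * τ) * theta1 (x - y) (2 * τ) := by
  rw [theta4_eq_theta3_add_half y, theta3_mul_theta3 _ _ hτ, ← add_assoc, ← sub_sub,
    ← theta4_eq_theta3_add_half, ← theta4_eq_theta3_sub_half, ← theta1_eq_theta2_sub_half,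
    theta1_eq_neg_theta2_add_half (x + y), neg_mul, sub_neg_eq_add]

lemma theta1_mul_theta2_zero (u : ℂ) (hτ : 0 < τ.im) :
    theta1 u τ * theta2 0 τ = 2 * (theta1 u (2 * τ) * theta4 u (2 * τ)) := by
  rw [theta1_mul_theta2 u 0 hτ, add_zero, sub_zero]
  ring

lemma theta2_zero_sq (hτ : 0 < τ.im) :
    theta2 0 τ ^ 2 = 2 * (theta2 0 (2 * τ) * theta3 0 (2 * τ)) := by
  rw [sq, theta2_mul_theta2 0 0 hτ, add_zero, sub_zero]
  ring

lemma theta3_mul_theta4_self (u : ℂ) (hτ : 0 < τ.im) :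
    theta3 u τ * theta4 u τ = theta4 (2 * u) (2 * τ) * theta4 0 (2 * τ) := by
  rw [theta3_mul_theta4 u u hτ, sub_self, theta1_zero, mul_zero, sub_zero, two_mul u]

lemma theta3_zero_mul_theta4_zero (hτ : 0 < τ.im) :
    theta3 0 τ * theta4 0 τ = theta4 0 (2 * τ) ^ 2 := by
  rw [theta3_mul_theta4_self 0 hτ, mul_zero, sq]

lemma theta2_zero_div_theta1 {u : ℂ} (hτ : 0 < τ.im) (hu : theta1 u τ ≠ 0)
    (hu2 : theta1 u (2 * τ) * theta4 u (2 * τ) ≠ 0) :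
    theta2 0 τ / theta1 u τ =
      theta2 0 (2 * τ) * theta3 0 (2 * τ) / (theta1 u (2 * τ) * theta4 u (2 * τ)) := by
  rw [div_eq_div_iff hu hu2]
  linear_combination theta1 u τ / 2 * theta2_zero_sq hτ
    - theta2 0 τ / 2 * theta1_mul_theta2_zero u hτ

end JacobiTheta

section Wronskian

lemma deriv_zero_of_even {𝕜 F : Type*} [NontriviallyNormedField 𝕜]
    [NormedAddCommGroup F] [IsAddTorsionFree F] [NormedSpace 𝕜 F] {f : 𝕜 → F} (hf : f.Even) :
    deriv f 0 = 0 := by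
  have h := deriv_comp_neg f 0
  rw [funext hf, neg_zero] at h
  exact self_eq_neg.mp h

lemma hasDerivAt_add_mul_sub {𝕜 𝔸 : Type*} [NontriviallyNormedField 𝕜] [NormedRing 𝔸]
    [NormedAlgebra 𝕜 𝔸] {f g : 𝕜 → 𝔸} {u : 𝕜} (hf : DifferentiableAt 𝕜 f u)
    (hg : DifferentiableAt 𝕜 g u) :
    HasDerivAt (fun v => f (u + v) * g (u - v)) (deriv f u * g u - f u * deriv g u) 0 := by
  have hf' : HasDerivAt (fun v => f (u + v)) (deriv f u) 0 :=
    HasDerivAt.comp_const_add u 0 (by simpa using hf.hasDerivAt)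
  have hg' : HasDerivAt (fun v => g (u - v)) (-deriv g u) 0 :=
    HasDerivAt.comp_const_sub u 0 (by simpa using hg.hasDerivAt)
  exact (hf'.mul hg').congr_deriv (by simp [sub_eq_add_neg])

variable {τ : ℂ}

lemma wronskian_theta1_theta2_eq_two_mul (u : ℂ) (hτ : 0 < τ.im) :
    deriv (theta1 · τ) u * theta2 u τ - theta1 u τ * deriv (theta2 · τ) u =
      2 * theta4 (2 * u) (2 * τ) * deriv (theta1 · (2 * τ)) 0 := by
  have hτ2 : 0 < (2 * τ).im := by simpa using hτ
  have hdup (v : ℂ) : theta1 (u + v) τ * theta2 (u - v) τ =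
      theta1 (2 * u) (2 * τ) * theta4 (2 * v) (2 * τ)
        + theta4 (2 * u) (2 * τ) * theta1 (2 * v) (2 * τ) := by
    rw [theta1_mul_theta2 _ _ hτ]
    ring_nf
  have hlhs := hasDerivAt_add_mul_sub (differentiable_theta1 hτ u) (differentiable_theta2 hτ u)
  have hscale {f : ℂ → ℂ} (hf : Differentiable ℂ f) :
      HasDerivAt (fun v => f (2 * v)) (2 * deriv f 0) 0 := by
    simpa [Function.comp_def, mul_comm] using
      (hf (2 * 0)).hasDerivAt.comp 0 ((hasDerivAt_id 0).const_mul 2)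
  have hrhs := ((hscale (differentiable_theta4 hτ2)).const_mul (theta1 (2 * u) (2 * τ))).add
    ((hscale (differentiable_theta1 hτ2)).const_mul (theta4 (2 * u) (2 * τ)))
  rw [hlhs.unique (hrhs.congr_of_eventuallyEq (.of_forall hdup)),
    deriv_zero_of_even (even_theta4 _)]
  ring

lemma wronskian_theta1_theta4_two_mul (u : ℂ) (hτ : 0 < τ.im) :
    2 * (deriv (theta1 · (2 * τ)) u * theta4 u (2 * τ)
        - theta1 u (2 * τ) * deriv (theta4 · (2 * τ)) u) =
      deriv (theta1 · τ) 0 * theta2 u τ := by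
  have hτ2 : 0 < (2 * τ).im := by simpa using hτ
  have hprod (v : ℂ) : theta1 v τ * theta2 u τ =
      theta1 (u + v) (2 * τ) * theta4 (u - v) (2 * τ)
        - theta4 (u + v) (2 * τ) * theta1 (u - v) (2 * τ) := by
    rw [theta1_mul_theta2 _ _ hτ, ← neg_sub u v, (even_theta4 _).eq, (odd_theta1 _).eq, add_comm v,
      mul_neg, ← sub_eq_add_neg]
  have hone := differentiable_theta1 hτ2 u
  have hfour := differentiable_theta4 hτ2 u
  have hrhs := (hasDerivAt_add_mul_sub hone hfour).sub (hasDerivAt_add_mul_sub hfour hone)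
  have hlhs := (differentiable_theta1 hτ 0).hasDerivAt.mul_const (theta2 u τ)
  rw [hlhs.unique (hrhs.congr_of_eventuallyEq (.of_forall hprod))]
  ring

end Wronskian

section ImInfty

variable {τ : ℂ}

lemma induction_of_eventually_im_atTop {P : ℂ → Prop}
    (hP : ∀ᶠ σ in comap im atTop, P σ) (hdesc : ∀ σ : ℂ, 0 < σ.im → P (2 * σ) → P σ)
    (hτ : 0 < τ.im) : P τ := by
  have him (m : ℕ) : (2 ^ m * τ).im = 2 ^ m * τ.im := by
    rw [← Complex.im_ofReal_mul]
    push_cast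
    rfl
  have htends : Tendsto (fun m : ℕ => 2 ^ m * τ) atTop (comap im atTop) := by
    refine tendsto_comap_iff.mpr (Tendsto.congr (fun m => (him m).symm) ?_)
    exact (tendsto_pow_atTop_atTop_of_one_lt one_lt_two).atTop_mul_const hτ
  obtain ⟨m, hm⟩ := (htends.eventually hP).exists
  induction m with
  | zero => simpa using hm
  | succ m ih =>
    refine ih (hdesc _ (by rw [him]; positivity) ?_)
    rwa [← mul_assoc, ← pow_succ']

lemma eq_of_tendsto_of_map_two_mul {f : ℂ → ℂ} {c : ℂ} (hlim : Tendsto f (comap im atTop) (𝓝 c))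
    (hf : ∀ σ : ℂ, 0 < σ.im → f (2 * σ) = f σ) (hτ : 0 < τ.im) : f τ = c := by
  by_contra hne
  exact induction_of_eventually_im_atTop (P := (f · ≠ f τ)) (hlim.eventually_ne (Ne.symm hne))
    (fun σ hσ h => hf σ hσ ▸ h) hτ rfl

lemma norm_cexp_pi_mul_I_mul_mul (τ : ℂ) (x : ℝ) :
    ‖cexp (π * I * τ * x)‖ = Real.exp (-(π * x * τ.im)) := by
  rw [Complex.norm_exp, show π * I * τ * x = ((π * x : ℝ) : ℂ) * (I * τ) by push_cast; ring,
    Complex.re_ofReal_mul, Complex.I_mul_re, mul_neg]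

lemma tendsto_tsum_mul_cexp_im_atTop {ι : Type*} {c : ι → ℂ} {e : ι → ℝ} {s : Finset ι}
    (hs : ∀ i ∈ s, e i = 0) (hpos : ∀ i ∉ s, 0 < e i)
    (hsum : Summable fun i => c i * cexp (π * I * τ * e i)) :
    Tendsto (fun σ => ∑' i, c i * cexp (π * I * σ * e i)) (comap im atTop) (𝓝 (∑ i ∈ s, c i)) := by
  classical
  have he (i : ι) : 0 ≤ e i := by
    by_cases hi : i ∈ s
    exacts [(hs i hi).ge, (hpos i hi).le]
  have hlim (i : ι) : Tendsto (fun σ => c i * cexp (π * I * σ * e i)) (comap im atTop)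
      (𝓝 (if i ∈ s then c i else 0)) := by
    by_cases hi : i ∈ s
    · simpa [hi, hs i hi] using tendsto_const_nhds
    · rw [if_neg hi, ← mul_zero (c i)]
      refine (tendsto_zero_iff_norm_tendsto_zero.mpr ?_).const_mul _
      simp_rw [norm_cexp_pi_mul_I_mul_mul]
      exact Real.tendsto_exp_neg_atTop_nhds_zero.comp
        (tendsto_comap.const_mul_atTop (mul_pos Real.pi_pos (hpos i hi)))
  have hbound : ∀ᶠ σ in comap im atTop, ∀ i,
      ‖c i * cexp (π * I * σ * e i)‖ ≤ ‖c i * cexp (π * I * τ * e i)‖ := by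
    filter_upwards [tendsto_comap.eventually (eventually_ge_atTop τ.im)] with σ hσ i
    simp_rw [norm_mul, norm_cexp_pi_mul_I_mul_mul]
    have := mul_nonneg Real.pi_pos.le (he i)
    gcongr
  have h := tendsto_tsum_of_dominated_convergence hsum.norm hlim hbound
  rwa [tsum_eq_sum (s := s) fun i hi => if_neg hi,
    Finset.sum_congr rfl fun i hi => if_pos hi] at h

lemma tendsto_thetaChar_zero_im_atTop (u : ℂ) :
    Tendsto (thetaChar 0 u ·) (comap im atTop) (𝓝 1) := by
  have hterm (σ : ℂ) (k : ℤ) : thetaCharTerm 0 u σ k =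
      cexp (2 * π * I * u * k) * cexp (π * I * σ * ((k : ℝ) ^ 2 : ℝ)) := by
    rw [thetaCharTerm, ← Complex.exp_add]
    push_cast
    ring_nf
  have hsum := summable_thetaCharTerm 0 u (τ := I) (by simp)
  simp_rw [thetaChar, hterm]
  rw [funext (hterm I)] at hsum
  convert tendsto_tsum_mul_cexp_im_atTop (s := {0}) (by simp) (fun k hk => ?_) hsum using 2
  · simp
  · have : k ≠ 0 := by simpa using hk
    positivity

lemma thetaCharTerm_half (u τ : ℂ) (k : ℤ) :
    cexp (-(π * I * τ / 4)) * thetaCharTerm (1 / 2) u τ k =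
      cexp (2 * π * I * u * (k + 1 / 2)) * cexp (π * I * τ * ((k : ℝ) ^ 2 + k : ℝ)) := by
  rw [thetaCharTerm, ← Complex.exp_add, ← Complex.exp_add]
  push_cast
  ring_nf

lemma sq_add_self_pos_of_notMem {k : ℤ} (hk : k ∉ ({0, -1} : Finset ℤ)) :
    0 < (k : ℝ) ^ 2 + k := by
  simp only [Finset.mem_insert, Finset.mem_singleton, not_or] at hk
  have : 0 < k ^ 2 + k := by
    rcases lt_or_ge k 0 with h | h
    · nlinarith [show k ≤ -2 by omega]
    · nlinarith [show 1 ≤ k by omega]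
  exact_mod_cast this

lemma tendsto_thetaChar_half_im_atTop (u : ℂ) :
    Tendsto (fun σ => cexp (-(π * I * σ / 4)) * thetaChar (1 / 2) u σ) (comap im atTop)
      (𝓝 (2 * cos (π * u))) := by
  have hsum := (summable_thetaCharTerm (1 / 2) u (τ := I) (by simp)).mul_left
    (cexp (-(π * I * I / 4)))
  simp_rw [thetaCharTerm_half] at hsum
  simp_rw [thetaChar, ← tsum_mul_left, thetaCharTerm_half]
  convert tendsto_tsum_mul_cexp_im_atTop (s := {0, -1}) (by simp)
    (fun _ => sq_add_self_pos_of_notMem) hsum using 2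
  rw [Finset.sum_pair (by simp), Complex.two_cos]
  push_cast
  ring_nf

lemma tendsto_deriv_thetaChar_half_im_atTop (u : ℂ) :
    Tendsto (fun σ => cexp (-(π * I * σ / 4)) * deriv (thetaChar (1 / 2) · σ) u) (comap im atTop)
      (𝓝 (-2 * π * sin (π * u))) := by
  have hterm (σ : ℂ) (k : ℤ) :
      cexp (-(π * I * σ / 4)) * (2 * π * I * (k + 1 / 2) * thetaCharTerm (1 / 2) u σ k) =
        2 * π * I * (k + 1 / 2) * cexp (2 * π * I * u * (k + 1 / 2)) *
          cexp (π * I * σ * ((k : ℝ) ^ 2 + k : ℝ)) := by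
    rw [mul_left_comm, thetaCharTerm_half, ← mul_assoc]
  have hsum := (hasSum_mul_thetaCharTerm (1 / 2) u (τ := I) (by simp)).summable.mul_left
    (cexp (-(π * I * I / 4)))
  simp_rw [hterm] at hsum
  have hlim := tendsto_tsum_mul_cexp_im_atTop (s := {0, -1}) (by simp)
    (fun _ => sq_add_self_pos_of_notMem) hsum
  convert hlim.congr' ?_ using 2
  · rw [Finset.sum_pair (by simp), show -2 * π * sin (π * u) = -π * (2 * sin (π * u)) by ring,
      Complex.two_sin]
    push_cast
    ring_nf
  · filter_upwards [tendsto_comap.eventually (eventually_gt_atTop 0)] with σ hσ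
    simp_rw [(hasDerivAt_thetaChar (1 / 2) u hσ).deriv, ← tsum_mul_left, hterm]

end ImInfty

section JacobiDerivative

lemma tendsto_theta3_im_atTop (u : ℂ) : Tendsto (theta3 u ·) (comap im atTop) (𝓝 1) := by
  simpa only [theta3_eq_thetaChar] using tendsto_thetaChar_zero_im_atTop u

lemma tendsto_theta4_im_atTop (u : ℂ) : Tendsto (theta4 u ·) (comap im atTop) (𝓝 1) :=
  tendsto_theta3_im_atTop (u + 1 / 2)

lemma tendsto_theta2_zero_im_atTop :
    Tendsto (fun σ => cexp (-(π * I * σ / 4)) * theta2 0 σ) (comap im atTop) (𝓝 2) := by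
  simpa only [theta2_eq_thetaChar, mul_zero, Complex.cos_zero, mul_one] using
    tendsto_thetaChar_half_im_atTop 0

lemma tendsto_deriv_theta1_zero_im_atTop :
    Tendsto (fun σ => cexp (-(π * I * σ / 4)) * deriv (theta1 · σ) 0) (comap im atTop)
      (𝓝 (2 * π)) := by
  have hderiv (σ : ℂ) : deriv (theta1 · σ) 0 = -deriv (thetaChar (1 / 2) · σ) (1 / 2) := by
    simp_rw [theta1_eq_neg_theta2_add_half, theta2_eq_thetaChar]
    rw [deriv.fun_neg, deriv_comp_add_const (thetaChar (1 / 2) · σ), zero_add]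
  convert (tendsto_deriv_thetaChar_half_im_atTop (1 / 2)).neg using 2
  · rw [hderiv, mul_neg]
  · rw [mul_one_div, Complex.sin_pi_div_two]
    ring

variable {τ : ℂ}

lemma deriv_theta1_zero_mul_theta2_zero (hτ : 0 < τ.im) :
    deriv (theta1 · τ) 0 * theta2 0 τ = 2 * theta4 0 (2 * τ) * deriv (theta1 · (2 * τ)) 0 := by
  simpa [theta1_zero] using wronskian_theta1_theta2_eq_two_mul 0 hτ

lemma thetaConstants_mul_theta2_zero (hτ : 0 < τ.im) :
    theta2 0 τ * theta3 0 τ * theta4 0 τ * theta2 0 τ =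
      2 * theta4 0 (2 * τ) * (theta2 0 (2 * τ) * theta3 0 (2 * τ) * theta4 0 (2 * τ)) := by
  linear_combination theta2 0 τ ^ 2 * theta3_zero_mul_theta4_zero hτ
    + theta4 0 (2 * τ) ^ 2 * theta2_zero_sq hτ

lemma thetaConstants_ne_zero (hτ : 0 < τ.im) : theta2 0 τ * theta3 0 τ * theta4 0 τ ≠ 0 := by
  refine induction_of_eventually_im_atTop
    (P := fun σ => theta2 0 σ * theta3 0 σ * theta4 0 σ ≠ 0) ?_ (fun σ hσ h => ?_) hτ
  · filter_upwards [tendsto_theta2_zero_im_atTop.eventually_ne two_ne_zero,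
      (tendsto_theta3_im_atTop 0).eventually_ne one_ne_zero,
      (tendsto_theta4_im_atTop 0).eventually_ne one_ne_zero] with σ h2 h3 h4
    exact mul_ne_zero (mul_ne_zero (right_ne_zero_of_mul h2) h3) h4
  · refine left_ne_zero_of_mul (b := theta2 0 σ) ?_
    rw [thetaConstants_mul_theta2_zero hσ]
    exact mul_ne_zero (mul_ne_zero two_ne_zero (right_ne_zero_of_mul h)) h

lemma theta2_zero_ne_zero (hτ : 0 < τ.im) : theta2 0 τ ≠ 0 :=
  left_ne_zero_of_mul (left_ne_zero_of_mul (thetaConstants_ne_zero hτ))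

lemma theta4_zero_ne_zero (hτ : 0 < τ.im) : theta4 0 τ ≠ 0 :=
  right_ne_zero_of_mul (thetaConstants_ne_zero hτ)

theorem deriv_theta1_zero (hτ : 0 < τ.im) :
    deriv (theta1 · τ) 0 = π * (theta2 0 τ * theta3 0 τ * theta4 0 τ) := by
  have hinv (σ : ℂ) (hσ : 0 < σ.im) :
      deriv (theta1 · (2 * σ)) 0 /
          (theta2 0 (2 * σ) * theta3 0 (2 * σ) * theta4 0 (2 * σ)) =
        deriv (theta1 · σ) 0 / (theta2 0 σ * theta3 0 σ * theta4 0 σ) := by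
    have hσ2 : 0 < (2 * σ).im := by simpa using hσ
    rw [← mul_div_mul_right _ (theta2 0 σ * theta3 0 σ * theta4 0 σ) (theta2_zero_ne_zero hσ),
      deriv_theta1_zero_mul_theta2_zero hσ, thetaConstants_mul_theta2_zero hσ,
      mul_div_mul_left _ _ (mul_ne_zero two_ne_zero (theta4_zero_ne_zero hσ2))]
  have hlim : Tendsto (fun σ => deriv (theta1 · σ) 0 / (theta2 0 σ * theta3 0 σ * theta4 0 σ))
      (comap im atTop) (𝓝 π) := by
    convert tendsto_deriv_theta1_zero_im_atTop.div ((tendsto_theta2_zero_im_atTop.mul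
      (tendsto_theta3_im_atTop 0)).mul (tendsto_theta4_im_atTop 0)) (by simp) using 2
    · simp only [Pi.div_apply, mul_assoc]
      rw [mul_div_mul_left _ _ (Complex.exp_ne_zero _)]
    · simp
  rw [← div_eq_iff (thetaConstants_ne_zero hτ)]
  exact eq_of_tendsto_of_map_two_mul
    (f := fun σ => deriv (theta1 · σ) 0 / (theta2 0 σ * theta3 0 σ * theta4 0 σ)) hlim hinv hτ

lemma wronskian_theta1_theta2 (u : ℂ) (hτ : 0 < τ.im) :
    deriv (theta1 · τ) u * theta2 u τ - theta1 u τ * deriv (theta2 · τ) u =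
      π * theta2 0 τ ^ 2 * (theta3 u τ * theta4 u τ) := by
  have hτ2 : 0 < (2 * τ).im := by simpa using hτ
  rw [wronskian_theta1_theta2_eq_two_mul u hτ, deriv_theta1_zero hτ2,
    theta3_mul_theta4_self u hτ, theta2_zero_sq hτ]
  ring

end JacobiDerivative

section SecondDerivative

variable {τ u : ℂ}

lemma Sp_two_mul (hτ : 0 < τ.im) (hu : theta1 u τ ≠ 0) :
    Sp u (2 * τ) = π * (theta3 0 τ * theta4 0 τ) * (theta2 u τ / theta1 u τ) := by
  have h2 := theta2_zero_ne_zero hτ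
  have hprod : theta1 u (2 * τ) * theta4 u (2 * τ) ≠ 0 :=
    right_ne_zero_of_mul (theta1_mul_theta2_zero u hτ ▸ mul_ne_zero hu h2)
  rw [Sp, zeta1, zeta4, div_sub_div _ _ (left_ne_zero_of_mul hprod) (right_ne_zero_of_mul hprod),
    ← mul_div_mul_left _ _ two_ne_zero, wronskian_theta1_theta4_two_mul u hτ,
    ← theta1_mul_theta2_zero u hτ, deriv_theta1_zero hτ]
  field_simp

theorem Spp_two_mul (hτ : 0 < τ.im) (hu : theta1 u τ ≠ 0) :
    Spp u (2 * τ) = -π ^ 2 * theta3 0 τ * theta4 0 τ * theta2 0 τ ^ 2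
      * (theta3 u τ * theta4 u τ) / theta1 u τ ^ 2 := by
  have hone := differentiable_theta1 hτ
  have hSp : (Sp · (2 * τ)) =ᶠ[𝓝 u]
      fun v => π * (theta3 0 τ * theta4 0 τ) * (theta2 v τ / theta1 v τ) := by
    filter_upwards [hone.continuous.continuousAt.eventually_ne hu] with v hv
    exact Sp_two_mul hτ hv
  have hquot := ((differentiable_theta2 hτ u).hasDerivAt.div (hone u).hasDerivAt hu).const_mul
    (π * (theta3 0 τ * theta4 0 τ))
  rw [Spp, (hquot.congr_of_eventuallyEq hSp).deriv, ← neg_sub, mul_comm (theta2 u τ),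
    mul_comm (deriv _ _) (theta1 u τ), wronskian_theta1_theta2 u hτ]
  ring

end SecondDerivative

/-- Theta representation and Landen-type identity for S'' (formula (n3)). -/
theorem Spp_theta_representation (τ u : ℂ) (hτ : 0 < τ.im)
    (h1 : theta1 u τ * theta4 u τ ≠ 0)
    (h2 : theta1 u (τ / 2) ≠ 0) :
    Spp u τ
        = -(Real.pi : ℂ) ^ 2 * theta2 0 τ ^ 2 * theta3 0 τ ^ 2 * theta4 0 τ ^ 3
            * theta4 (2 * u) τ / (theta1 u τ ^ 2 * theta4 u τ ^ 2)
    ∧ Spp u τ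
        = -(Real.pi : ℂ) ^ 2 * theta3 0 (τ / 2) * theta4 0 (τ / 2) * theta2 0 (τ / 2) ^ 2
            * (theta3 u (τ / 2) * theta4 u (τ / 2)) / theta1 u (τ / 2) ^ 2 := by
  obtain ⟨σ, rfl⟩ : ∃ σ, τ = 2 * σ := ⟨τ / 2, by ring⟩
  rw [mul_div_cancel_left₀ σ two_ne_zero] at h2 ⊢
  have hσ : 0 < σ.im := by simpa using hτ
  refine ⟨?_, Spp_two_mul hσ h2⟩
  calc Spp u (2 * σ)
      = -π ^ 2 * (theta3 0 σ * theta4 0 σ) * (theta3 u σ * theta4 u σ)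
          * (theta2 0 σ / theta1 u σ) ^ 2 := by
        rw [Spp_two_mul hσ h2]
        ring
    _ = -π ^ 2 * theta4 0 (2 * σ) ^ 2 * (theta4 (2 * u) (2 * σ) * theta4 0 (2 * σ))
          * (theta2 0 (2 * σ) * theta3 0 (2 * σ)
            / (theta1 u (2 * σ) * theta4 u (2 * σ))) ^ 2 := by
        rw [theta3_zero_mul_theta4_zero hσ, theta3_mul_theta4_self u hσ,
          theta2_zero_div_theta1 hσ h2 h1]
    _ = _ := by ring
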